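/- (CLEM E-step: first latent expectation.) Let ν>0, σ²>0, r∈(0,1) and μ₁,μ₂∈ℝ. For all y₁,y₂∈ℝ, with y_i* = y_i − μ_i and v(u) = 1 + (1−r)u²/(νσ²), one has ∫₀^∞ ∫₀^∞ z₁ · f(y₁|z₁,μ₁) · f(y₂|z₂,μ₂) · g_{ν/2,r}(z₁,z₂) dz₁ dz₂ = (2(1−r)^{ν/2+2} Γ((ν+1)/2) Γ((ν+3)/2)/(π ν² σ² Γ(ν/2)²)) · ₂F₁((ν+1)/2, (ν+3)/2; ν/2; r/(v(y₁*)v(y₂*))) / (v(y₁*)^{(ν+3)/2} · v(y₂*)^{(ν+1)/2}). Dividing by the pairwise joint density f(y₁,y₂) gives the CLEM conditional expectation ζ₁ = E(Z_{t} | Y_t=y₁, Y_{t−i}=y₂). -/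

import Mathlib

open MeasureTheory Real Set

/-- Modified Bessel function of the first kind (series form). -/
noncomputable def besselI (α x : ℝ) : ℝ :=
  ∑' k : ℕ, (x / 2) ^ (2 * (k : ℝ) + α) / (Real.Gamma ((k : ℝ) + α + 1) * (Nat.factorial k : ℝ))

/-- Gamma density with rate `γ` and shape `α`. -/
noncomputable def gammaPdf (γ α z : ℝ) : ℝ :=
  γ ^ α * z ^ (α - 1) * Real.exp (-γ * z) / Real.Gamma α

/-- Kibble bivariate gamma density with parameters `φ > 0` and `r ∈ (0,1)`. -/
noncomputable def kibble (φ r z₁ z₂ : ℝ) : ℝ :=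
  φ ^ (φ + 1) / ((1 - r) * Real.Gamma φ) * (z₁ * z₂ / r) ^ ((φ - 1) / 2) *
    Real.exp (-φ * (z₁ + z₂) / (1 - r)) *
    besselI (φ - 1) (2 * φ * Real.sqrt (r * z₁ * z₂) / (1 - r))

/-- Conditional normal density of the NSVt model given latent `z`: `N(μ, σ²/z)`. -/
noncomputable def normCond (σ μ y z : ℝ) : ℝ :=
  Real.sqrt z / (Real.sqrt (2 * Real.pi) * σ) * Real.exp (-z * (y - μ) ^ 2 / (2 * σ ^ 2))

/-- Student-t density with `ν` degrees of freedom, location `μ` and scale `σ`. -/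
noncomputable def studentTPdf (ν μ σ y : ℝ) : ℝ :=
  Real.Gamma ((ν + 1) / 2) / (Real.Gamma (ν / 2) * Real.sqrt (Real.pi * ν) * σ) *
    (1 + (y - μ) ^ 2 / (ν * σ ^ 2)) ^ (-(ν + 1) / 2)

/-- Gauss hypergeometric series `₂F₁(a₁,a₂;b;x)`. -/
noncomputable def hyp2F1 (a₁ a₂ b x : ℝ) : ℝ :=
  ∑' k : ℕ, Real.Gamma ((k : ℝ) + a₁) * Real.Gamma ((k : ℝ) + a₂) * Real.Gamma b /
    (Real.Gamma a₁ * Real.Gamma a₂ * Real.Gamma ((k : ℝ) + b)) * x ^ k / (Nat.factorial k : ℝ)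

/-- Confluent hypergeometric (Kummer) series `₁F₁(a;b;x)`. -/
noncomputable def hyp1F1 (a b x : ℝ) : ℝ :=
  ∑' k : ℕ, Real.Gamma ((k : ℝ) + a) * Real.Gamma b /
    (Real.Gamma a * Real.Gamma ((k : ℝ) + b)) * x ^ k / (Nat.factorial k : ℝ)

/-- Generalized Laguerre polynomial of degree `n` with parameter `α`. -/
noncomputable def laguerreL (n : ℕ) (α x : ℝ) : ℝ :=
  ∑ i ∈ Finset.range (n + 1),
    (-1 : ℝ) ^ i * Real.Gamma ((n : ℝ) + α + 1) /
      (Real.Gamma (α + (i : ℝ) + 1) * (Nat.factorial (n - i) : ℝ) * (Nat.factorial i : ℝ)) * x ^ i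

/-- Negative binomial pmf with parameters `φ > 0` and `r ∈ (0,1)`. -/
noncomputable def nbinomPmf (φ r : ℝ) (u : ℕ) : ℝ :=
  Real.Gamma (φ + u) / (Real.Gamma φ * (Nat.factorial u : ℝ)) * (1 - r) ^ φ * r ^ u

/-- The quantity `ω(y₁,y₂)` appearing in the pairwise joint density of the NSVt model. -/
noncomputable def omegaFn (ν σ r μ₁ μ₂ y₁ y₂ : ℝ) : ℝ :=
  ((1 + (1 - r) * (y₁ - μ₁) ^ 2 / (ν * σ ^ 2)) *
    (1 + (1 - r) * (y₂ - μ₂) ^ 2 / (ν * σ ^ 2)))⁻¹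

/-- Pairwise joint density of the NSVt model (with `r = ρʲ`). -/
noncomputable def pairDensity (ν σ r μ₁ μ₂ y₁ y₂ : ℝ) : ℝ :=
  (1 - r) ^ (ν / 2 + 1) / (Real.pi * ν * σ ^ 2) *
    (Real.Gamma ((ν + 1) / 2) / Real.Gamma (ν / 2)) ^ 2 *
    omegaFn ν σ r μ₁ μ₂ y₁ y₂ ^ ((ν + 1) / 2) *
    hyp2F1 ((ν + 1) / 2) ((ν + 1) / 2) (ν / 2) (r * omegaFn ν σ r μ₁ μ₂ y₁ y₂)

lemma aux_summable1 (a b x : ℝ) (ha : 0 < a) (hb : 0 < b) (hx : 0 < x) :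
    Summable (fun k : ℕ => x ^ k / (Gamma (k + b) * (Nat.factorial k : ℝ)) * Gamma (k + a)) := by
  have hG : ∀ (c : ℝ), 0 < c → ∀ k : ℕ, 0 < Gamma ((k : ℝ) + c) := fun c hc k =>
    Gamma_pos_of_pos (by positivity)
  have hS : ∀ (c : ℝ), 0 < c → ∀ k : ℕ, Gamma (((k + 1 : ℕ) : ℝ) + c) = (k + c) * Gamma ((k : ℝ) + c) := by
    intro c hc k
    rw [← Gamma_add_one (by positivity)]
    congr 1; push_cast; ring
  have hpos : ∀ k : ℕ, 0 < x ^ k / (Gamma (k + b) * (Nat.factorial k : ℝ)) * Gamma (k + a) := by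
    intro k
    have := hG a ha k
    have := hG b hb k
    positivity
  refine summable_of_ratio_test_tendsto_lt_one (l := 0) one_pos (.of_forall fun k => (hpos k).ne') ?_
  have heq : ∀ k : ℕ, ‖x ^ (k+1) / (Gamma ((k+1 : ℕ) + b) * (Nat.factorial (k+1) : ℝ)) * Gamma ((k+1 : ℕ) + a)‖ /
      ‖x ^ k / (Gamma (k + b) * (Nat.factorial k : ℝ)) * Gamma (k + a)‖ =
      x * ((a + 1 * (k:ℝ)) / (b + 1 * (k:ℝ))) * (1 / ((k:ℝ) + 1)) := by
    intro k
    rw [norm_of_nonneg (hpos k).le, norm_of_nonneg (hpos (k+1)).le, hS a ha, hS b hb, Nat.factorial_succ]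
    have h1 := (hG a ha k).ne'
    have h2 := (hG b hb k).ne'
    have h3 : (Nat.factorial k : ℝ) ≠ 0 := by positivity
    have h4 : (k : ℝ) + b ≠ 0 := by positivity
    have h5 : b + (k : ℝ) ≠ 0 := by positivity
    push_cast
    field_simp
    ring
  simp only [heq]
  have t1 := tendsto_add_mul_div_add_mul_atTop_nhds a b 1 (one_ne_zero (α := ℝ))
  have := (t1.const_mul x).mul tendsto_one_div_add_atTop_nhds_zero_nat
  simpa using this

lemma aux_summable2 (a a' b x : ℝ) (ha : 0 < a) (ha' : 0 < a') (hb : 0 < b) (hx : 0 < x) (hx1 : x < 1) :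
    Summable (fun k : ℕ => x ^ k / (Gamma (k + b) * (Nat.factorial k : ℝ)) * Gamma (k + a) * Gamma (k + a')) := by
  have hG : ∀ (c : ℝ), 0 < c → ∀ k : ℕ, 0 < Gamma ((k : ℝ) + c) := fun c hc k =>
    Gamma_pos_of_pos (by positivity)
  have hS : ∀ (c : ℝ), 0 < c → ∀ k : ℕ, Gamma (((k + 1 : ℕ) : ℝ) + c) = (k + c) * Gamma ((k : ℝ) + c) := by
    intro c hc k
    rw [← Gamma_add_one (by positivity)]
    congr 1; push_cast; ring
  have hpos : ∀ k : ℕ, 0 < x ^ k / (Gamma (k + b) * (Nat.factorial k : ℝ)) * Gamma (k + a) * Gamma (k + a') := by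
    intro k
    have := hG a ha k
    have := hG a' ha' k
    have := hG b hb k
    positivity
  refine summable_of_ratio_test_tendsto_lt_one (l := x) hx1 (.of_forall fun k => (hpos k).ne') ?_
  have heq : ∀ k : ℕ, ‖x ^ (k+1) / (Gamma ((k+1 : ℕ) + b) * (Nat.factorial (k+1) : ℝ)) * Gamma ((k+1 : ℕ) + a) * Gamma ((k+1 : ℕ) + a')‖ /
      ‖x ^ k / (Gamma (k + b) * (Nat.factorial k : ℝ)) * Gamma (k + a) * Gamma (k + a')‖ =
      x * ((a + 1 * (k:ℝ)) / (b + 1 * (k:ℝ))) * ((a' + 1 * (k:ℝ)) / (1 + 1 * (k:ℝ))) := by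
    intro k
    rw [norm_of_nonneg (hpos k).le, norm_of_nonneg (hpos (k+1)).le, hS a ha, hS a' ha', hS b hb, Nat.factorial_succ]
    have h1 := (hG a ha k).ne'
    have h1' := (hG a' ha' k).ne'
    have h2 := (hG b hb k).ne'
    have h3 : (Nat.factorial k : ℝ) ≠ 0 := by positivity
    have h4 : (k : ℝ) + b ≠ 0 := by positivity
    have h5 : b + (k : ℝ) ≠ 0 := by positivity
    have h6 : 1 + (k : ℝ) ≠ 0 := by positivity
    push_cast
    field_simp
    ring
  simp only [heq]
  have t1 := tendsto_add_mul_div_add_mul_atTop_nhds a b 1 (one_ne_zero (α := ℝ))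
  have t2 := tendsto_add_mul_div_add_mul_atTop_nhds a' 1 1 (one_ne_zero (α := ℝ))
  have := (t1.const_mul x).mul t2
  simpa using this

lemma aux_int (a s : ℝ) (ha : 0 < a) (hs : 0 < s) (k : ℕ) :
    ∫ z in Ioi (0:ℝ), z ^ ((k:ℝ) + a - 1) * exp (-(s * z)) = (1 / s) ^ k * (1 / s) ^ a * Gamma (k + a) := by
  rw [Real.integral_rpow_mul_exp_neg_mul_Ioi (by positivity) hs, rpow_add (by positivity), rpow_natCast]

lemma aux_integrable (a s : ℝ) (ha : 0 < a) (hs : 0 < s) (k : ℕ) :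
    Integrable (fun z => z ^ ((k:ℝ) + a - 1) * exp (-(s * z))) (volume.restrict (Ioi (0:ℝ))) := by
  apply Integrable.of_integral_ne_zero
  rw [aux_int a s ha hs k]
  have : 0 < Gamma (k + a) := Gamma_pos_of_pos (by positivity)
  positivity

/-- Termwise integration against a gamma kernel, for non-negative coefficients. -/
lemma aux_swap (a s : ℝ) (ha : 0 < a) (hs : 0 < s) (c : ℕ → ℝ) (hc : ∀ k, 0 ≤ c k)
    (hsum : Summable (fun k : ℕ => c k * ((1 / s) ^ k * (1 / s) ^ a * Gamma (k + a)))) :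
    ∫ z in Ioi (0:ℝ), ∑' k : ℕ, c k * (z ^ ((k:ℝ) + a - 1) * exp (-(s * z))) =
      ∑' k : ℕ, c k * ((1 / s) ^ k * (1 / s) ^ a * Gamma (k + a)) := by
  have hint : ∀ k : ℕ, ∫ z in Ioi (0:ℝ), c k * (z ^ ((k:ℝ) + a - 1) * exp (-(s * z))) =
      c k * ((1 / s) ^ k * (1 / s) ^ a * Gamma (k + a)) := by
    intro k
    rw [integral_const_mul, aux_int a s ha hs]
  rw [← integral_tsum_of_summable_integral_norm]
  · exact tsum_congr hint
  · intro k
    exact (aux_integrable a s ha hs k).const_mul _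
  · refine hsum.congr fun k => ?_
    rw [← hint k]
    refine setIntegral_congr_fun measurableSet_Ioi fun z hz => ?_
    have hz : 0 < z := hz
    have := hc k
    exact (norm_of_nonneg (by positivity)).symm

lemma aux_double (a₁ a₂ b s₁ s₂ q : ℝ) (ha₁ : 0 < a₁) (ha₂ : 0 < a₂) (hb : 0 < b) (hs₁ : 0 < s₁)
    (hs₂ : 0 < s₂) (hq : 0 < q) (hqs : q < s₁ * s₂) :
    ∫ z₂ in Ioi (0:ℝ), ∫ z₁ in Ioi (0:ℝ), ∑' k : ℕ,
      (q ^ k / (Gamma (k + b) * (Nat.factorial k : ℝ)) * (z₂ ^ ((k:ℝ) + a₂ - 1) * exp (-(s₂ * z₂)))) *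
        (z₁ ^ ((k:ℝ) + a₁ - 1) * exp (-(s₁ * z₁))) =
    (1 / s₁) ^ a₁ * (1 / s₂) ^ a₂ * ∑' k : ℕ, (q / (s₁ * s₂)) ^ k / (Gamma (k + b) * (Nat.factorial k : ℝ)) *
      Gamma (k + a₁) * Gamma (k + a₂) := by
  have hG : ∀ (c : ℝ), 0 < c → ∀ k : ℕ, 0 < Gamma ((k : ℝ) + c) := fun c hc k =>
    Gamma_pos_of_pos (by positivity)
  have inner : ∀ z₂ ∈ Ioi (0:ℝ), ∫ z₁ in Ioi (0:ℝ), ∑' k : ℕ,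
      (q ^ k / (Gamma (k + b) * (Nat.factorial k : ℝ)) * (z₂ ^ ((k:ℝ) + a₂ - 1) * exp (-(s₂ * z₂)))) *
        (z₁ ^ ((k:ℝ) + a₁ - 1) * exp (-(s₁ * z₁))) =
      ∑' k : ℕ, (q ^ k / (Gamma (k + b) * (Nat.factorial k : ℝ)) *
        ((1 / s₁) ^ k * (1 / s₁) ^ a₁ * Gamma (k + a₁))) * (z₂ ^ ((k:ℝ) + a₂ - 1) * exp (-(s₂ * z₂))) := by
    intro z₂ hz
    have hz : 0 < z₂ := hz
    rw [aux_swap a₁ s₁ ha₁ hs₁]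
    · exact tsum_congr fun k => by ring
    · intro k
      have := hG b hb k
      positivity
    · refine ((aux_summable1 a₁ b (q * z₂ / s₁) ha₁ hb (by positivity)).mul_left
        ((1 / s₁) ^ a₁ * (z₂ ^ (a₂ - 1) * exp (-(s₂ * z₂))))).congr fun k => ?_
      rw [show (k:ℝ) + a₂ - 1 = k + (a₂ - 1) by ring, rpow_add hz, rpow_natCast, div_pow, mul_pow,
        one_div_pow]
      ring
  rw [setIntegral_congr_fun measurableSet_Ioi inner, aux_swap a₂ s₂ ha₂ hs₂, ← tsum_mul_left]
  · refine tsum_congr fun k => ?_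
    rw [div_pow q, mul_pow, one_div_pow, one_div_pow]
    have := (hG b hb k).ne'
    field_simp
  · intro k
    have := hG b hb k
    have := hG a₁ ha₁ k
    positivity
  · refine ((aux_summable2 a₁ a₂ b (q / (s₁ * s₂)) ha₁ ha₂ hb (by positivity)
      ((div_lt_one (by positivity)).2 hqs)).mul_left ((1 / s₁) ^ a₁ * (1 / s₂) ^ a₂)).congr fun k => ?_
    rw [div_pow q, mul_pow, one_div_pow, one_div_pow]
    have := (hG b hb k).ne'
    field_simp

lemma aux_integrand (φ σ r μ₁ μ₂ y₁ y₂ z₁ z₂ : ℝ) (hφ : 0 < φ) (hσ : 0 < σ) (hr0 : 0 < r) (hr1 : r < 1)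
    (hz₁ : 0 < z₁) (hz₂ : 0 < z₂) :
    z₁ * normCond σ μ₁ y₁ z₁ * normCond σ μ₂ y₂ z₂ * kibble φ r z₁ z₂ =
    (φ ^ (φ + 1) / ((1 - r) * Gamma φ) * (φ / (1 - r)) ^ (φ - 1) / (2 * π * σ ^ 2)) *
    ∑' k : ℕ, ((φ ^ 2 * r / (1 - r) ^ 2) ^ k / (Gamma (k + φ) * (Nat.factorial k : ℝ)) *
      (z₂ ^ ((k:ℝ) + (φ + 1 / 2) - 1) *
        exp (-((φ / (1 - r) * (1 + (1 - r) * (y₂ - μ₂) ^ 2 / (2 * φ * σ ^ 2))) * z₂)))) *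
      (z₁ ^ ((k:ℝ) + (φ + 3 / 2) - 1) *
        exp (-((φ / (1 - r) * (1 + (1 - r) * (y₁ - μ₁) ^ 2 / (2 * φ * σ ^ 2))) * z₁))) := by
  have h1r : 0 < 1 - r := by linarith
  unfold normCond kibble besselI
  rw [← tsum_mul_left, ← tsum_mul_left, ← tsum_mul_left]
  refine tsum_congr fun k => ?_
  have hg : Gamma ((k:ℝ) + φ) ≠ 0 := (Gamma_pos_of_pos (by positivity)).ne'
  have e1 : exp (-z₁ * (y₁ - μ₁) ^ 2 / (2 * σ ^ 2)) * exp (-z₂ * (y₂ - μ₂) ^ 2 / (2 * σ ^ 2)) *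
      exp (-φ * (z₁ + z₂) / (1 - r)) =
      exp (-((φ / (1 - r) * (1 + (1 - r) * (y₂ - μ₂) ^ 2 / (2 * φ * σ ^ 2))) * z₂)) *
      exp (-((φ / (1 - r) * (1 + (1 - r) * (y₁ - μ₁) ^ 2 / (2 * φ * σ ^ 2))) * z₁)) := by
    rw [← exp_add, ← exp_add, ← exp_add]
    congr 1
    field_simp
    ring
  have e2 : (z₁ * z₂ / r) ^ ((φ - 1) / 2) *
      (2 * φ * √(r * z₁ * z₂) / (1 - r) / 2) ^ (2 * (k:ℝ) + (φ - 1)) =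
      (φ / (1 - r)) ^ (φ - 1) * (φ ^ 2 * r / (1 - r) ^ 2) ^ k *
        (z₁ ^ ((k:ℝ) + (φ - 1)) * z₂ ^ ((k:ℝ) + (φ - 1))) := by
    have hs : (2 * φ * √(r * z₁ * z₂) / (1 - r) / 2) = φ / (1 - r) * (r * (z₁ * z₂)) ^ ((1:ℝ) / 2) := by
      rw [sqrt_eq_rpow, mul_assoc r]; field_simp
    have hp : 0 < z₁ * z₂ := by positivity
    rw [hs, mul_rpow (by positivity) (by positivity), ← rpow_mul (by positivity),
      show (1:ℝ) / 2 * (2 * (k:ℝ) + (φ - 1)) = k + (φ - 1) / 2 by ring,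
      div_rpow hp.le hr0.le, ← mul_rpow hz₁.le hz₂.le,
      rpow_add (x := φ / (1 - r)) (by positivity), rpow_add (x := r * (z₁ * z₂)) (by positivity),
      mul_rpow (z := (φ - 1) / 2) hr0.le hp.le, rpow_natCast,
      show (k:ℝ) + (φ - 1) = k + ((φ - 1) / 2 + (φ - 1) / 2) by ring, rpow_add hp, rpow_add hp,
      rpow_natCast, show (2:ℝ) * k = ((2 * k : ℕ) : ℝ) by push_cast; ring, rpow_natCast,
      show φ ^ 2 * r / (1 - r) ^ 2 = (φ / (1 - r)) ^ 2 * r by rw [div_pow]; ring, mul_pow r, mul_pow ((φ / (1 - r)) ^ 2),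
      ← pow_mul]
    have : r ^ ((φ - 1) / 2) ≠ 0 := by positivity
    field_simp
  have e3 : √(2 * π) * √(2 * π) = 2 * π := mul_self_sqrt (by positivity)
  have z1e : z₁ ^ ((k:ℝ) + (φ + 3 / 2) - 1) = z₁ * √z₁ * z₁ ^ ((k:ℝ) + (φ - 1)) := by
    rw [sqrt_eq_rpow, show (k:ℝ) + (φ + 3 / 2) - 1 = 1 + 1 / 2 + (k + (φ - 1)) by ring,
      rpow_add hz₁, rpow_add hz₁, rpow_one]
  have z2e : z₂ ^ ((k:ℝ) + (φ + 1 / 2) - 1) = √z₂ * z₂ ^ ((k:ℝ) + (φ - 1)) := by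
    rw [sqrt_eq_rpow, show (k:ℝ) + (φ + 1 / 2) - 1 = 1 / 2 + (k + (φ - 1)) by ring, rpow_add hz₂]
  rw [z1e, z2e, show (k:ℝ) + (φ - 1) + 1 = k + φ by ring]
  calc _ = (z₁ * √z₁ * √z₂ / (√(2 * π) * √(2 * π) * σ ^ 2) * (φ ^ (φ + 1) / ((1 - r) * Gamma φ)) /
        (Gamma (k + φ) * (Nat.factorial k : ℝ))) *
        (exp (-z₁ * (y₁ - μ₁) ^ 2 / (2 * σ ^ 2)) * exp (-z₂ * (y₂ - μ₂) ^ 2 / (2 * σ ^ 2)) *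
          exp (-φ * (z₁ + z₂) / (1 - r))) *
        ((z₁ * z₂ / r) ^ ((φ - 1) / 2) *
          (2 * φ * √(r * z₁ * z₂) / (1 - r) / 2) ^ (2 * (k:ℝ) + (φ - 1))) := by ring
    _ = _ := by rw [e1, e2, e3]; ring

lemma aux_main (φ σ r μ₁ μ₂ : ℝ) (hφ : 0 < φ) (hσ : 0 < σ)
    (hr0 : 0 < r) (hr1 : r < 1) (y₁ y₂ : ℝ) :
    (∫ z₂ in Set.Ioi (0 : ℝ), ∫ z₁ in Set.Ioi (0 : ℝ),
        z₁ * normCond σ μ₁ y₁ z₁ * normCond σ μ₂ y₂ z₂ * kibble φ r z₁ z₂)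
      = 2 * (1 - r) ^ (φ + 2) * Real.Gamma (φ + 1 / 2) * Real.Gamma (φ + 3 / 2) /
          (Real.pi * (2 * φ) ^ 2 * σ ^ 2 * Real.Gamma φ ^ 2) *
          hyp2F1 (φ + 1 / 2) (φ + 3 / 2) φ
            (r / ((1 + (1 - r) * (y₁ - μ₁) ^ 2 / (2 * φ * σ ^ 2)) *
              (1 + (1 - r) * (y₂ - μ₂) ^ 2 / (2 * φ * σ ^ 2)))) /
          ((1 + (1 - r) * (y₁ - μ₁) ^ 2 / (2 * φ * σ ^ 2)) ^ (φ + 3 / 2) *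
            (1 + (1 - r) * (y₂ - μ₂) ^ 2 / (2 * φ * σ ^ 2)) ^ (φ + 1 / 2)) := by
  have h1r : 0 < 1 - r := by linarith
  rw [setIntegral_congr_fun measurableSet_Ioi fun z₂ hz₂ =>
    (setIntegral_congr_fun measurableSet_Ioi fun z₁ hz₁ =>
      aux_integrand φ σ r μ₁ μ₂ y₁ y₂ z₁ z₂ hφ hσ hr0 hr1 hz₁ hz₂).trans (integral_const_mul _ _)]
  rw [integral_const_mul]
  have hv : ∀ u : ℝ, 1 ≤ 1 + (1 - r) * u ^ 2 / (2 * φ * σ ^ 2) := by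
    intro u
    have : 0 ≤ (1 - r) * u ^ 2 / (2 * φ * σ ^ 2) := by positivity
    linarith
  have hv₁ := hv (y₁ - μ₁)
  have hv₂ := hv (y₂ - μ₂)
  generalize 1 + (1 - r) * (y₁ - μ₁) ^ 2 / (2 * φ * σ ^ 2) = v₁ at *
  generalize 1 + (1 - r) * (y₂ - μ₂) ^ 2 / (2 * φ * σ ^ 2) = v₂ at *
  have p₁ : 0 < v₁ := by linarith
  have p₂ : 0 < v₂ := by linarith
  have hvv : 1 ≤ v₁ * v₂ := one_le_mul_of_one_le_of_one_le hv₁ hv₂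
  have hq : φ ^ 2 * r / (1 - r) ^ 2 < φ / (1 - r) * v₁ * (φ / (1 - r) * v₂) := by
    rw [show φ / (1 - r) * v₁ * (φ / (1 - r) * v₂) = φ ^ 2 * (v₁ * v₂) / (1 - r) ^ 2 by
      field_simp]
    gcongr
    linarith
  rw [aux_double _ _ _ _ _ _ (by positivity) (by positivity) hφ (by positivity) (by positivity)
    (by positivity) hq]
  have hx : φ ^ 2 * r / (1 - r) ^ 2 / (φ / (1 - r) * v₁ * (φ / (1 - r) * v₂)) = r / (v₁ * v₂) := by
    field_simp
  rw [hx]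
  have hH : hyp2F1 (φ + 1 / 2) (φ + 3 / 2) φ (r / (v₁ * v₂)) =
      Gamma φ / (Gamma (φ + 1 / 2) * Gamma (φ + 3 / 2)) *
      ∑' k : ℕ, (r / (v₁ * v₂)) ^ k / (Gamma (k + φ) * (Nat.factorial k : ℝ)) *
      Gamma (k + (φ + 3 / 2)) * Gamma (k + (φ + 1 / 2)) := by
    unfold hyp2F1
    rw [← tsum_mul_left]
    refine tsum_congr fun k => ?_
    ring
  rw [hH]
  generalize (∑' k : ℕ, (r / (v₁ * v₂)) ^ k / (Gamma (k + φ) * (Nat.factorial k : ℝ)) *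
      Gamma (k + (φ + 3 / 2)) * Gamma (k + (φ + 1 / 2))) = S
  have g0 : Gamma φ ≠ 0 := (Gamma_pos_of_pos hφ).ne'
  have g1 : Gamma (φ + 1 / 2) ≠ 0 := (Gamma_pos_of_pos (by positivity)).ne'
  have g2 : Gamma (φ + 3 / 2) ≠ 0 := (Gamma_pos_of_pos (by positivity)).ne'
  have hpow : φ ^ (φ + 1) * (φ / (1 - r)) ^ (φ - 1) * ((1 / (φ / (1 - r) * v₁)) ^ (φ + 3 / 2) *
      (1 / (φ / (1 - r) * v₂)) ^ (φ + 1 / 2)) =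
      (1 - r) ^ (φ + 2) * (1 - r) / φ ^ 2 / (v₁ ^ (φ + 3 / 2) * v₂ ^ (φ + 1 / 2)) := by
    have hw : ∀ (v c : ℝ), 0 < v → (1 / (φ / (1 - r) * v)) ^ c = ((φ / (1 - r)) ^ c)⁻¹ / v ^ c := by
      intro v c hv
      rw [one_div, inv_rpow (by positivity), mul_rpow (by positivity) hv.le, mul_inv]
      ring
    rw [hw _ _ p₁, hw _ _ p₂]
    have hA : (φ / (1 - r)) ^ (φ + 3 / 2) * (φ / (1 - r)) ^ (φ + 1 / 2) =
        (φ / (1 - r)) ^ (φ - 1) * ((φ ^ (φ + 1) / (1 - r) ^ (φ + 2) * φ ^ 2 / (1 - r))) := by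
      rw [← rpow_add (by positivity),
        show φ + 3 / 2 + (φ + 1 / 2) = (φ - 1) + (φ + 3) by ring, rpow_add (by positivity)]
      congr 1
      rw [div_rpow hφ.le h1r.le, show φ + 3 = (φ + 1) + (2:ℕ) by push_cast; ring,
        rpow_add_natCast hφ.ne',
        show (φ + 1) + ((2:ℕ) : ℝ) = (φ + 2) + 1 by push_cast; ring, rpow_add_one h1r.ne']
      field_simp
    have : ((φ / (1 - r)) ^ (φ + 3 / 2))⁻¹ * ((φ / (1 - r)) ^ (φ + 1 / 2))⁻¹ =
        ((φ / (1 - r)) ^ (φ - 1))⁻¹ * ((φ ^ (φ + 1))⁻¹ * (1 - r) ^ (φ + 2) / φ ^ 2 * (1 - r)) := by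
      rw [← mul_inv, hA, mul_inv]
      congr 1
      field_simp
    have n1 : (φ / (1 - r)) ^ (φ - 1) ≠ 0 := by positivity
    have n2 : φ ^ (φ + 1) ≠ 0 := by positivity
    calc _ = φ ^ (φ + 1) * (φ / (1 - r)) ^ (φ - 1) *
        (((φ / (1 - r)) ^ (φ + 3 / 2))⁻¹ * ((φ / (1 - r)) ^ (φ + 1 / 2))⁻¹) /
          (v₁ ^ (φ + 3 / 2) * v₂ ^ (φ + 1 / 2)) := by ring
      _ = _ := by
        rw [this]
        congr 1
        generalize (φ / (1 - r)) ^ (φ - 1) = A at *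
        generalize φ ^ (φ + 1) = B at *
        field_simp
  calc _ = (φ ^ (φ + 1) * (φ / (1 - r)) ^ (φ - 1) * ((1 / (φ / (1 - r) * v₁)) ^ (φ + 3 / 2) *
      (1 / (φ / (1 - r) * v₂)) ^ (φ + 1 / 2))) * (S / (1 - r) / Gamma φ / (2 * π * σ ^ 2)) := by
        rw [← div_div (φ ^ (φ + 1))]
        ring
    _ = _ := by
      rw [hpow]
      have n1 : v₁ ^ (φ + 3 / 2) ≠ 0 := by positivity
      have n2 : v₂ ^ (φ + 1 / 2) ≠ 0 := by positivity
      generalize v₁ ^ (φ + 3 / 2) = A at *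
      generalize v₂ ^ (φ + 1 / 2) = B at *
      generalize (1 - r) ^ (φ + 2) = C at *
      field_simp

/-- CLEM E-step, first latent expectation (numerator of `ζ₁`). -/
theorem clem_zeta1 (ν σ r μ₁ μ₂ : ℝ) (hν : 0 < ν) (hσ : 0 < σ)
    (hr : r ∈ Set.Ioo (0 : ℝ) 1) (y₁ y₂ : ℝ) :
    (∫ z₂ in Set.Ioi (0 : ℝ), ∫ z₁ in Set.Ioi (0 : ℝ),
        z₁ * normCond σ μ₁ y₁ z₁ * normCond σ μ₂ y₂ z₂ * kibble (ν / 2) r z₁ z₂)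
      = 2 * (1 - r) ^ (ν / 2 + 2) * Real.Gamma ((ν + 1) / 2) * Real.Gamma ((ν + 3) / 2) /
          (Real.pi * ν ^ 2 * σ ^ 2 * Real.Gamma (ν / 2) ^ 2) *
          hyp2F1 ((ν + 1) / 2) ((ν + 3) / 2) (ν / 2)
            (r / ((1 + (1 - r) * (y₁ - μ₁) ^ 2 / (ν * σ ^ 2)) *
              (1 + (1 - r) * (y₂ - μ₂) ^ 2 / (ν * σ ^ 2)))) /
          ((1 + (1 - r) * (y₁ - μ₁) ^ 2 / (ν * σ ^ 2)) ^ ((ν + 3) / 2) *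
            (1 + (1 - r) * (y₂ - μ₂) ^ 2 / (ν * σ ^ 2)) ^ ((ν + 1) / 2)) := by
  have h := aux_main (ν / 2) σ r μ₁ μ₂ (by positivity) hσ hr.1 hr.2 y₁ y₂
  rw [show 2 * (ν / 2) = ν by ring, show ν / 2 + 1 / 2 = (ν + 1) / 2 by ring,
    show ν / 2 + 3 / 2 = (ν + 3) / 2 by ring] at h
  exact h
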